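/- arXiv:2311.09364 — 2 statements merged into one kernel-verified Lean document; each statement's English description precedes it below -/
import Mathlib

section
/- Every 2-connected outerplanar graph that is not a cycle has a compliant edge; moreover it has at least two edge-disjoint flat paths whose endpoints span compliant edges. -/
open SimpleGraph

universe u

/-- A flat (suspended) path: a path of length at least 2 all of whose internal
vertices have degree 2 in `G`. -/
def IsFlatPath {V : Type u} (G : SimpleGraph V) {x y : V} (p : G.Walk x y) : Prop :=
  p.IsPath ∧ 2 ≤ p.length ∧
    ∀ v ∈ p.support, v ≠ x → v ≠ y → (G.neighborSet v).ncard = 2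

/-- An edge `xy` is compliant if `x` and `y` are also joined by a flat path. -/
def Compliant {V : Type u} (G : SimpleGraph V) (x y : V) : Prop :=
  G.Adj x y ∧ ∃ p : G.Walk x y, IsFlatPath G p

/-- A graph is 2-connected if it has at least 3 vertices and remains connected
after deleting any single vertex. -/
def TwoConnected {V : Type u} (G : SimpleGraph V) : Prop :=
  3 ≤ Nat.card V ∧ ∀ v : V, ((⊤ : G.Subgraph).deleteVerts {v}).coe.Connected

/-- A (finite) graph is a cycle iff it is connected and 2-regular. -/
def IsCycleGraph {V : Type u} (G : SimpleGraph V) : Prop :=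
  G.Connected ∧ ∀ v : V, (G.neighborSet v).ncard = 2

/-- Data exhibiting a subgraph of `G` which is a subdivision of `H`:
branch vertices are given by an injection `f`, and each edge of `H` is
replaced by a path in `G`, these paths being internally disjoint and their
internal vertices avoiding the branch vertices. -/
structure SubdivisionIn {V : Type u} {W : Type*} (G : SimpleGraph V) (H : SimpleGraph W) where
  f : W → V
  inj : Function.Injective f
  path : ∀ ⦃u v : W⦄, H.Adj u v → G.Walk (f u) (f v)
  isPath : ∀ ⦃u v : W⦄ (h : H.Adj u v), (path h).IsPath
  internal_not_branch : ∀ ⦃u v : W⦄ (h : H.Adj u v), ∀ w ∈ (path h).support,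
      (∃ z, w = f z) → w = f u ∨ w = f v
  internal_disjoint : ∀ ⦃u v u' v' : W⦄ (h : H.Adj u v) (h' : H.Adj u' v'),
      s(u, v) ≠ s(u', v') → ∀ w ∈ (path h).support, w ∈ (path h').support →
        w = f u ∨ w = f v

/-- The vertices of the subdivided subgraph. -/
def SubdivisionIn.verts {V : Type u} {W : Type*} {G : SimpleGraph V} {H : SimpleGraph W}
    (D : SubdivisionIn G H) : Set V :=
  {w | ∃ (u v : W) (h : H.Adj u v), w ∈ (D.path h).support}

/-- `G` contains a subdivision of `H` as a subgraph. -/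
def ContainsSubdivision {V : Type u} {W : Type*} (G : SimpleGraph V) (H : SimpleGraph W) : Prop :=
  Nonempty (SubdivisionIn G H)

/-- A graph is outerplanar iff it contains no subdivision of `K₄` or `K_{2,3}`
as a subgraph. -/
def Outerplanar {V : Type u} (G : SimpleGraph V) : Prop :=
  ¬ ContainsSubdivision G (⊤ : SimpleGraph (Fin 4)) ∧
  ¬ ContainsSubdivision G (completeBipartiteGraph (Fin 2) (Fin 3))
/-- A cyclic parametrisation of a cycle of length `n`. -/
structure Cyc {V : Type u} (G : SimpleGraph V) (n : ℕ) (c : ℕ → V) : Prop where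
  three : 3 ≤ n
  adj : ∀ t, G.Adj (c t) (c (t + 1))
  per : ∀ t, c (t + n) = c t
  inj : ∀ s t, s ≤ t → t < s + n → c s = c t → s = t

theorem Cyc.rot {V : Type u} {G : SimpleGraph V} {n : ℕ} {c : ℕ → V} (h : Cyc G n c) (a : ℕ) :
    Cyc G n (fun t => c (a + t)) := by
  refine ⟨h.three, fun t => h.adj (a + t), fun t => by
    rw [← add_assoc]; exact h.per (a + t), fun s t h1 h2 h3 => ?_⟩
  have := h.inj (a + s) (a + t) (by omega) (by omega) h3
  omega

theorem Cyc.mod {V : Type u} {G : SimpleGraph V} {n : ℕ} {c : ℕ → V} (h : Cyc G n c) (s : ℕ) :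
    c s = c (s % n) := by
  induction s using Nat.strong_induction_on with
  | _ s ih =>
    by_cases hs : s < n
    · rw [Nat.mod_eq_of_lt hs]
    · have h3 := h.three
      have h1 := ih (s - n) (by omega)
      have h2 := h.per (s - n)
      rw [show s - n + n = s by omega] at h2
      rw [h2, h1, ← Nat.mod_eq_sub_mod (by omega)]

theorem Cyc.window {V : Type u} {G : SimpleGraph V} {n : ℕ} {c : ℕ → V} (h : Cyc G n c)
    (a s : ℕ) : ∃ t, a ≤ t ∧ t < a + n ∧ c t = c s := by
  have h3 := h.three
  induction a with
  | zero => exact ⟨s % n, by omega, by have := Nat.mod_lt s (by omega : n > 0); omega, (h.mod s).symm⟩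
  | succ a ih =>
    obtain ⟨t, h1, h2, h4⟩ := ih
    by_cases hta : t = a
    · exact ⟨t + n, by omega, by omega, by rw [h.per, h4]⟩
    · exact ⟨t, by omega, by omega, h4⟩

theorem Cyc.arc {V : Type u} {G : SimpleGraph V} {n : ℕ} {c : ℕ → V} (h : Cyc G n c)
    (a : ℕ) (k : ℕ) (hk : k < n) : ∃ p : G.Walk (c a) (c (a + k)), p.IsPath ∧ p.length = k ∧
      (∀ w ∈ p.support, ∃ t, a ≤ t ∧ t ≤ a + k ∧ w = c t) ∧
      (∀ e ∈ p.edges, ∃ t, a ≤ t ∧ t < a + k ∧ e = s(c t, c (t + 1))) := by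
  induction k with
  | zero =>
    refine ⟨Walk.nil, by simp, by simp, ?_, by simp⟩
    intro w hw
    simp at hw
    exact ⟨a, by omega, by omega, hw⟩
  | succ k ih =>
    obtain ⟨p, hp, hl, hs, he⟩ := ih (by omega)
    refine ⟨p.concat (h.adj (a + k)), ?_, by simp [hl], ?_, ?_⟩
    · refine hp.concat ?_ _
      intro hw
      obtain ⟨t, h1, h2, h3⟩ := hs _ hw
      have := h.inj t (a + k + 1) (by omega) (by omega) h3.symm
      omega
    · intro w hw
      rw [Walk.support_concat] at hw
      simp at hw
      rcases hw with hw | hw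
      · obtain ⟨t, h1, h2, h3⟩ := hs _ hw
        exact ⟨t, h1, by omega, h3⟩
      · exact ⟨a + (k + 1), by omega, by omega, hw⟩
    · intro e hw
      rw [Walk.edges_concat] at hw
      simp at hw
      rcases hw with hw | hw
      · obtain ⟨t, h1, h2, h3⟩ := he _ hw
        exact ⟨t, h1, by omega, h3⟩
      · exact ⟨a + k, by omega, by omega, hw⟩

theorem Cyc.arc' {V : Type u} {G : SimpleGraph V} {n : ℕ} {c : ℕ → V} (h : Cyc G n c)
    (a b : ℕ) (hab : a ≤ b) (hb : b < a + n) : ∃ p : G.Walk (c a) (c b), p.IsPath ∧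
      p.length = b - a ∧
      (∀ w ∈ p.support, ∃ t, a ≤ t ∧ t ≤ b ∧ w = c t) ∧
      (∀ e ∈ p.edges, ∃ t, a ≤ t ∧ t < b ∧ e = s(c t, c (t + 1))) := by
  obtain ⟨k, rfl⟩ := Nat.exists_eq_add_of_le hab
  obtain ⟨p, h1, h2, h3, h4⟩ := h.arc a k (by omega)
  exact ⟨p, h1, by omega, h3, h4⟩

theorem cyc_of_path {V : Type u} {G : SimpleGraph V} {a b : V} (q : G.Walk a b) (hq : q.IsPath)
    (hl : 2 ≤ q.length) (hab : G.Adj b a) : ∃ c, Cyc G (q.length + 1) c := by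
  refine ⟨fun t => q.getVert (t % (q.length + 1)), by omega, ?_, ?_, ?_⟩
  · intro t
    have hlt := Nat.mod_lt t (by omega : q.length + 1 > 0)
    by_cases ht : t % (q.length + 1) = q.length
    · have : (t + 1) % (q.length + 1) = 0 := by
        rw [Nat.add_mod, ht, Nat.mod_eq_of_lt (by omega : 1 < q.length + 1)]; simp
      simp [ht, this, hab]
    · have : (t + 1) % (q.length + 1) = t % (q.length + 1) + 1 := by
        rw [Nat.add_mod, Nat.mod_eq_of_lt (by omega : 1 < q.length + 1),
          Nat.mod_eq_of_lt (by omega)]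
      simp only [this]
      exact q.adj_getVert_succ (by omega)
  · intro t; simp
  · intro s t h1 h2 h3
    have hs := Nat.mod_lt s (by omega : q.length + 1 > 0)
    have ht := Nat.mod_lt t (by omega : q.length + 1 > 0)
    have := hq.getVert_injOn (by simp; omega) (by simp; omega) h3
    have h5 : s ≡ t [MOD (q.length + 1)] := this
    have h6 := (Nat.modEq_iff_dvd' h1).1 h5
    have h7 := Nat.eq_zero_of_dvd_of_lt h6 (by omega)
    omega

theorem mkSub {V : Type u} {W : Type*} (G : SimpleGraph V) (H : SimpleGraph W) (f : W → V)
    (inj : Function.Injective f) (S : W → W → Set V)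
    (hp : ∀ u v, H.Adj u v → ∃ p : G.Walk (f u) (f v), p.IsPath ∧ ∀ w ∈ p.support, w ∈ S u v)
    (hb : ∀ u v, H.Adj u v → ∀ z, f z ∈ S u v → z = u ∨ z = v)
    (hd : ∀ u v u' v', H.Adj u v → H.Adj u' v' → s(u, v) ≠ s(u', v') → ∀ w, w ∈ S u v →
      w ∈ S u' v' → w = f u ∨ w = f v) : ContainsSubdivision G H := by
  choose p hp1 hp2 using hp
  refine ⟨⟨f, inj, fun u v h => p u v h, fun u v h => hp1 u v h, ?_, ?_⟩⟩
  · rintro u v h w hw ⟨z, rfl⟩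
    rcases hb u v h z (hp2 _ _ _ _ hw) with rfl | rfl <;> simp
  · intro u v u' v' h h' hne w hw hw'
    exact hd u v u' v' h h' hne w (hp2 _ _ _ _ hw) (hp2 _ _ _ _ hw')

/-- Position sets of the six paths of the `K₄` subdivision. -/
def posSet (n k j l : ℕ) : Fin 4 → Fin 4 → ℕ → Prop :=
  ![![fun _ => False, fun t => t ≤ k, fun t => t = 0 ∨ t = j, fun t => t = 0 ∨ (l ≤ t ∧ t < n)],
    ![fun t => t ≤ k, fun _ => False, fun t => k ≤ t ∧ t ≤ j, fun t => t = k ∨ t = l],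
    ![fun t => t = 0 ∨ t = j, fun t => k ≤ t ∧ t ≤ j, fun _ => False, fun t => j ≤ t ∧ t ≤ l],
    ![fun t => t = 0 ∨ (l ≤ t ∧ t < n), fun t => t = k ∨ t = l, fun t => j ≤ t ∧ t ≤ l,
      fun _ => False]]

theorem posSet_symm (n k j l : ℕ) (u v : Fin 4) : posSet n k j l u v = posSet n k j l v u := by
  fin_cases u <;> fin_cases v <;> rfl

theorem posSet_lt {n k j l : ℕ} (h1 : 0 < k) (h2 : k < j) (h3 : j < l) (h4 : l < n) (u v : Fin 4)
    (t : ℕ) (h : posSet n k j l u v t) : t < n := by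
  fin_cases u <;> fin_cases v <;> simp [posSet] at h <;> omega

theorem posSet_branch {n k j l : ℕ} (h1 : 0 < k) (h2 : k < j) (h3 : j < l) (h4 : l < n)
    (u v z : Fin 4) (h : posSet n k j l u v (![0, k, j, l] z)) : z = u ∨ z = v := by
  fin_cases u <;> fin_cases v <;> fin_cases z <;> simp [posSet] at h ⊢ <;> omega

set_option maxHeartbeats 4000000 in
theorem posSet_disj {n k j l : ℕ} (h1 : 0 < k) (h2 : k < j) (h3 : j < l) (h4 : l < n)
    (u v u' v' : Fin 4) (hne : s(u, v) ≠ s(u', v')) (t : ℕ) (h : posSet n k j l u v t)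
    (h' : posSet n k j l u' v' t) : t = ![0, k, j, l] u ∨ t = ![0, k, j, l] v := by
  fin_cases u <;> fin_cases v <;> fin_cases u' <;> fin_cases v' <;>
    first
    | (exfalso; revert hne; simp; done)
    | (simp [posSet] at h h' ⊢ <;> omega)

theorem Cyc.k4 {V : Type u} {G : SimpleGraph V} {n : ℕ} {c : ℕ → V} (h : Cyc G n c)
    {k j l : ℕ} (h1 : 0 < k) (h2 : k < j) (h3 : j < l) (h4 : l < n)
    (ha : G.Adj (c 0) (c j)) (hb : G.Adj (c k) (c l)) :
    ContainsSubdivision G (⊤ : SimpleGraph (Fin 4)) := by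
  have inj : ∀ s t, s < n → t < n → c s = c t → s = t := by
    intro s t hs ht e
    rcases le_total s t with hst | hst
    · exact h.inj s t hst (by omega) e
    · exact (h.inj t s hst (by omega) e.symm).symm
  have hlt : ∀ z, ![0, k, j, l] z < n := by
    intro z; fin_cases z <;> simp <;> omega
  have key : ∀ u v : Fin 4, u < v → ∃ p : G.Walk (c (![0, k, j, l] u)) (c (![0, k, j, l] v)),
      p.IsPath ∧ ∀ w ∈ p.support, ∃ t, posSet n k j l u v t ∧ w = c t := by
    have edge : ∀ s t, G.Adj (c s) (c t) → ∃ p : G.Walk (c s) (c t), p.IsPath ∧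
        ∀ w ∈ p.support, ∃ r, (r = s ∨ r = t) ∧ w = c r := by
      intro s t hst
      refine ⟨Walk.cons hst Walk.nil, by simp [hst.ne], ?_⟩
      intro w hw
      simp at hw
      rcases hw with rfl | rfl
      · exact ⟨s, by simp⟩
      · exact ⟨t, by simp⟩
    have arcs : ∀ s t, s ≤ t → t < s + n → ∃ p : G.Walk (c s) (c t), p.IsPath ∧
        ∀ w ∈ p.support, ∃ r, (s ≤ r ∧ r ≤ t) ∧ w = c r := by
      intro s t hst hst'
      obtain ⟨p, hp, -, hs, -⟩ := h.arc' s t hst hst'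
      refine ⟨p, hp, fun w hw => ?_⟩
      obtain ⟨r, e1, e2, e3⟩ := hs w hw
      exact ⟨r, ⟨e1, e2⟩, e3⟩
    have cn : c n = c 0 := by simpa using h.per 0
    intro u v huv
    fin_cases u <;> fin_cases v <;> first | (exfalso; revert huv; decide) | skip
    · obtain ⟨p, hp, hs⟩ := arcs 0 k (by omega) (by omega)
      refine ⟨p, hp, fun w hw => ?_⟩
      obtain ⟨r, e1, e2⟩ := hs w hw
      exact ⟨r, e1.2, e2⟩
    · exact edge 0 j ha
    · obtain ⟨p, hp, hs⟩ := arcs l n (by omega) (by omega)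
      refine ⟨(p.copy rfl cn).reverse, by simpa using hp, fun w hw => ?_⟩
      obtain ⟨r, e1, e2⟩ := hs w (by simpa using hw)
      by_cases hr : r = n
      · subst hr
        exact ⟨0, Or.inl rfl, by rw [e2, cn]⟩
      · exact ⟨r, Or.inr ⟨e1.1, by omega⟩, e2⟩
    · exact arcs k j (by omega) (by omega)
    · exact edge k l hb
    · exact arcs j l (by omega) (by omega)
  refine mkSub G _ (fun z => c (![0, k, j, l] z)) ?_
    (fun u v => {w | ∃ t, posSet n k j l u v t ∧ w = c t}) ?_ ?_ ?_
  · intro u v huv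
    have := inj _ _ (hlt u) (hlt v) huv
    revert this
    fin_cases u <;> fin_cases v <;> simp <;> omega
  · intro u v huv
    rcases lt_or_gt_of_ne huv.ne with hlt | hlt
    · exact key u v hlt
    · obtain ⟨p, hp, hs⟩ := key v u hlt
      refine ⟨p.reverse, hp.reverse, fun w hw => ?_⟩
      rw [Set.mem_ofPred_eq, posSet_symm]
      exact hs w (by simpa using hw)
  · rintro u v huv z ⟨t, ht, e⟩
    have := inj _ _ (hlt z) (posSet_lt h1 h2 h3 h4 u v t ht) e
    subst this
    exact posSet_branch h1 h2 h3 h4 u v z ht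
  · rintro u v u' v' - - hne w ⟨t, ht, rfl⟩ ⟨t', ht', e⟩
    have := inj _ _ (posSet_lt h1 h2 h3 h4 _ _ t ht) (posSet_lt h1 h2 h3 h4 _ _ t' ht') e
    subst this
    rcases posSet_disj h1 h2 h3 h4 u v u' v' hne t ht ht' with rfl | rfl <;> simp

theorem theta {V : Type u} {G : SimpleGraph V} {x y : V} (m : Fin 3 → V)
    (hm : ∀ i, G.Adj x (m i)) (p : ∀ i, G.Walk (m i) y) (hp : ∀ i, (p i).IsPath)
    (hmy : ∀ i, m i ≠ y) (hx : ∀ i, x ∉ (p i).support)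
    (hd : ∀ i j, i ≠ j → ∀ w, w ∈ (p i).support → w ∈ (p j).support → w = y) :
    ContainsSubdivision G (completeBipartiteGraph (Fin 2) (Fin 3)) := by
  have hms : ∀ i, m i ∈ (p i).support := fun i => (p i).start_mem_support
  have hys : ∀ i, y ∈ (p i).support := fun i => (p i).end_mem_support
  have hxy : x ≠ y := fun e => hx 0 (e ▸ hys 0)
  have hmij : ∀ i j, m i ∈ (p j).support → i = j := by
    intro i j hij
    by_contra hne
    exact hmy i (hd i j hne _ (hms i) hij)
  let S : Fin 2 → Fin 3 → Set V := fun a i =>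
    if a = 0 then {w | w = x ∨ w = m i} else {w | w ∈ (p i).support}
  let f : Fin 2 ⊕ Fin 3 → V := Sum.elim (fun a => if a = 0 then x else y) m
  have hS : ∀ a i, ∃ q : G.Walk (f (Sum.inl a)) (f (Sum.inr i)), q.IsPath ∧
      ∀ w ∈ q.support, w ∈ S a i := by
    intro a i
    fin_cases a
    · exact ⟨Walk.cons (hm i) Walk.nil, by simp [f, (hm i).ne], by simp [S, f]⟩
    · exact ⟨(p i).reverse, (hp i).reverse, fun w hw => by
        have hw' : w ∈ (p i).reverse.support := hw
        rw [Walk.support_reverse, List.mem_reverse] at hw'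
        simpa [S] using hw'⟩
  have hSb : ∀ a i z, f z ∈ S a i → z = Sum.inl a ∨ z = Sum.inr i := by
    intro a i z hz
    rcases z with b | k
    · fin_cases a <;> fin_cases b <;> simp [S, f] at hz ⊢
      · exact hz.elim (fun e => hxy e.symm) (fun e => hmy i e.symm)
      · exact hx i hz
    · fin_cases a <;> simp [S, f] at hz ⊢
      · rcases hz with hz | hz
        · exact absurd hz (hm k).ne'
        · exact hmij k i (by rw [hz]; exact hms i)
      · exact hmij k i hz
  have hSd : ∀ a i b k, ¬ (a = b ∧ i = k) → ∀ w, w ∈ S a i → w ∈ S b k →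
      w = f (Sum.inl a) ∨ w = f (Sum.inr i) := by
    intro a i b k hne w h1 h2
    fin_cases a <;> fin_cases b <;> simp [S, f] at h1 h2 hne ⊢
    · exact h1
    · exact h1
    · rcases h2 with rfl | rfl
      · exact absurd h1 (hx i)
      · right; rw [hmij k i h1]
    · exact Or.inl (hd i k hne w h1 h2)
  refine mkSub G _ f ?_ (fun u v => match u, v with
    | Sum.inl a, Sum.inr i => S a i
    | Sum.inr i, Sum.inl a => S a i
    | _, _ => ∅) ?_ ?_ ?_
  · intro u v huv
    rcases u with a | i <;> rcases v with b | k
    · fin_cases a <;> fin_cases b <;> simp [f] at huv ⊢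
      · exact hxy huv
      · exact hxy huv.symm
    · fin_cases a <;> simp [f] at huv
      · exact absurd huv (hm k).ne
      · exact absurd huv.symm (hmy k)
    · fin_cases b <;> simp [f] at huv
      · exact absurd huv (hm i).ne'
      · exact absurd huv (hmy i)
    · simp [f] at huv
      rw [hmij i k (by rw [huv]; exact hms k)]
  · intro u v huv
    rcases u with a | i <;> rcases v with b | k <;> simp at huv
    · exact hS a k
    · obtain ⟨q, h1, h2⟩ := hS b i
      exact ⟨q.reverse, h1.reverse, fun w hw => h2 w (by simpa using hw)⟩
  · intro u v huv z hz
    rcases u with a | i <;> rcases v with b | k <;> simp at huv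
    · exact hSb a k z hz
    · exact (hSb b i z hz).symm
  · intro u v u' v' huv huv' hne w hw hw'
    rcases u with a | i <;> rcases v with b | k <;> simp at huv <;>
      rcases u' with a' | i' <;> rcases v' with b' | k' <;> simp at huv'
    · exact hSd a k a' k' (by rintro ⟨rfl, rfl⟩; exact hne rfl) w hw hw'
    · exact hSd a k b' i' (by rintro ⟨rfl, rfl⟩; exact hne Sym2.eq_swap) w hw hw'
    · exact (hSd b i a' k' (by rintro ⟨rfl, rfl⟩; exact hne Sym2.eq_swap) w hw hw').symm
    · exact (hSd b i b' i' (by rintro ⟨rfl, rfl⟩; exact hne rfl) w hw hw').symm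

theorem TwoConnected.avoid {V : Type u} {G : SimpleGraph V} (h : TwoConnected G) {v a b : V}
    (ha : a ≠ v) (hb : b ≠ v) : ∃ p : G.Walk a b, v ∉ p.support := by
  have ha' : a ∈ ((⊤ : G.Subgraph).deleteVerts {v}).verts := by simp [ha]
  have hb' : b ∈ ((⊤ : G.Subgraph).deleteVerts {v}).verts := by simp [hb]
  obtain ⟨q⟩ := (h.2 v).preconnected ⟨a, ha'⟩ ⟨b, hb'⟩
  refine ⟨q.map (Subgraph.hom _), ?_⟩
  intro hv
  have hv := List.mem_map.1 ((congrArg (v ∈ ·) (Walk.support_map (Subgraph.hom _) q)).mp hv)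
  obtain ⟨w, -, hw⟩ := hv
  have := w.2
  simp at this
  exact this hw

theorem isPath_append_of {V : Type u} {G : SimpleGraph V} {a b d : V} (p : G.Walk a b)
    (q : G.Walk b d) (hp : p.IsPath) (hq : q.IsPath)
    (hd : ∀ w, w ∈ p.support → w ∈ q.support → w = b) : (p.append q).IsPath := by
  induction p with
  | nil => simpa using hq
  | cons hadj p ih =>
    rw [Walk.cons_append, Walk.cons_isPath_iff]
    rw [Walk.cons_isPath_iff] at hp
    refine ⟨ih q hp.1 hq (fun w h1 h2 => hd w (by simp [h1]) h2), ?_⟩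
    rw [Walk.mem_support_append_iff]
    rintro (h1 | h1)
    · exact hp.2 h1
    · have := hd _ (by simp) h1
      subst this
      exact hp.2 p.end_mem_support

theorem first_hit {V : Type u} {G : SimpleGraph V} (S : Set V) {a z : V} (q : G.Walk a z)
    (hz : z ∈ S) : ∃ b ∈ S, ∃ p : G.Walk a b, p.IsPath ∧ (∀ w ∈ p.support, w ∈ S → w = b) ∧
      ∀ w ∈ p.support, w ∈ q.support := by
  classical
  have : ∃ b ∈ S, ∃ p : G.Walk a b, (∀ w ∈ p.support, w ∈ S → w = b) ∧
      ∀ w ∈ p.support, w ∈ q.support := by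
    induction q with
    | nil => exact ⟨_, hz, Walk.nil, by simp, by simp⟩
    | @cons a a' z hadj q ih =>
      by_cases ha : a ∈ S
      · exact ⟨a, ha, Walk.nil, by simp, by simp⟩
      · obtain ⟨b, hb, p, h1, h2⟩ := ih hz
        refine ⟨b, hb, Walk.cons hadj p, ?_, ?_⟩
        · intro w hw hwS
          rw [Walk.support_cons, List.mem_cons] at hw
          rcases hw with rfl | hw
          · exact absurd hwS ha
          · exact h1 w hw hwS
        · intro w hw
          rw [Walk.support_cons, List.mem_cons] at hw ⊢
          exact hw.imp id (h2 w)
  obtain ⟨b, hb, p, h1, h2⟩ := this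
  exact ⟨b, hb, p.bypass, p.bypass_isPath, fun w hw => h1 w (p.support_bypass_subset_support hw),
    fun w hw => h2 w (p.support_bypass_subset_support hw)⟩

theorem exists_cyc {V : Type u} [Finite V] {G : SimpleGraph V} (h : TwoConnected G) :
    ∃ n c, Cyc G n c := by
  classical
  have := Fintype.ofFinite V
  have hc : 2 < Fintype.card V := by
    have := h.1; rw [Nat.card_eq_fintype_card] at this; omega
  obtain ⟨u, v, w, huv, huw, hvw⟩ := Fintype.two_lt_card_iff.1 hc
  have step : ∀ v w : V, u ≠ v → u ≠ w → v ≠ w → ∃ z, G.Adj u z ∧ z ≠ v := by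
    intro v w huv huw hvw
    obtain ⟨p, hp⟩ := h.avoid huv hvw.symm
    cases p with
    | nil => exact absurd rfl huw
    | @cons _ z _ hadj p =>
      refine ⟨z, hadj, ?_⟩
      rintro rfl
      exact hp (by simp)
  obtain ⟨a, ha, hav⟩ := step v w huv huw hvw
  obtain ⟨b, hb, hba⟩ := step a v ha.ne huv hav
  obtain ⟨p, hp⟩ := h.avoid ha.ne' hb.ne'
  have h0 : 0 < p.bypass.length := by
    by_contra h0
    exact hba (Walk.eq_of_length_eq_zero (p := p.bypass) (by omega)).symm
  obtain ⟨c, hcyc⟩ := cyc_of_path (Walk.cons ha p.bypass)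
    (p.bypass_isPath.cons fun hu => hp (p.support_bypass_subset_support hu))
    (by rw [Walk.length_cons]; omega) hb.symm
  exact ⟨_, c, hcyc⟩

theorem Cyc.le_card {V : Type u} [Finite V] {G : SimpleGraph V} {n : ℕ} {c : ℕ → V}
    (h : Cyc G n c) : n ≤ Nat.card V := by
  have : Function.Injective (fun i : Fin n => c i) := by
    intro i j hij
    have hij : c i = c j := hij
    have hi := i.2
    have hj := j.2
    rcases le_total i.1 j.1 with h1 | h1
    · exact Fin.ext (h.inj _ _ h1 (by omega) hij)
    · exact Fin.ext (h.inj _ _ h1 (by omega) hij.symm).symm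
  simpa using Nat.card_le_card_of_injective _ this

theorem ear_step {V : Type u} {G : SimpleGraph V} (h2 : TwoConnected G)
    (hno : ¬ ContainsSubdivision G (completeBipartiteGraph (Fin 2) (Fin 3))) {n : ℕ} {c : ℕ → V}
    (h : Cyc G n c) {v : V} (hv : v ∉ Set.range c) (hadj : G.Adj (c 0) v) :
    ∃ n' c', n < n' ∧ Cyc G n' c' := by
  have h3 := h.three
  have cn : c n = c 0 := by simpa using h.per 0
  have h10 : c 1 ≠ c 0 := by
    intro e
    have := h.inj 0 1 (by omega) (by omega) e.symm
    omega
  obtain ⟨q, hq⟩ := h2.avoid hadj.ne' h10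
  obtain ⟨b, ⟨s, rfl⟩, E, hE, hEb, hEq⟩ := first_hit (Set.range c) q ⟨1, rfl⟩
  have hE0 : c 0 ∉ E.support := fun hh => hq (hEq _ hh)
  obtain ⟨j, hj0, hjn, hj⟩ := h.window 0 s
  have hEb : ∀ w ∈ E.support, w ∈ Set.range c → w = c j := fun w h1 h2 => (hEb w h1 h2).trans hj.symm
  have hE' : ∃ E' : G.Walk v (c j), E'.IsPath ∧ (∀ w ∈ E'.support, w ∈ Set.range c → w = c j) ∧
      c 0 ∉ E'.support :=
    ⟨E.copy rfl hj.symm, by simpa using hE, by simpa using hEb, by simpa using hE0⟩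
  obtain ⟨E, hE, hEb, hE0⟩ := hE'
  have hjpos : j ≠ 0 := by
    rintro rfl
    exact hE0 E.end_mem_support
  have hvj : v ≠ c j := fun e => hv ⟨j, e.symm⟩
  have hElen : 0 < E.length := by
    by_contra h0
    exact hvj (Walk.eq_of_length_eq_zero (p := E) (by omega))
  have ext : ∀ Q : G.Walk (c j) (c 0), Q.IsPath → Q.length = n - 1 →
      (∀ w ∈ Q.support, w ∈ Set.range c) → ∃ n' c', n < n' ∧ Cyc G n' c' := by
    intro Q hQ hQl hQs
    obtain ⟨c', hc'⟩ := cyc_of_path (E.append Q)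
      (isPath_append_of E Q hE hQ fun w h1 h2 => hEb w h1 (hQs w h2))
      (by rw [Walk.length_append]; omega) hadj
    exact ⟨_, c', by rw [Walk.length_append]; omega, hc'⟩
  by_cases hj1 : j = 1
  · subst hj1
    obtain ⟨p, hp, hl, hs, -⟩ := h.arc' 1 n (by omega) (by omega)
    refine ext (p.copy rfl cn) (by simpa using hp) (by simpa using hl) ?_
    intro w hw
    obtain ⟨t, -, -, rfl⟩ := hs w (by simpa using hw)
    exact ⟨t, rfl⟩
  by_cases hj2 : j = n - 1
  · obtain ⟨p, hp, hl, hs, -⟩ := h.arc' 0 j (by omega) (by omega)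
    refine ext p.reverse hp.reverse (by rw [Walk.length_reverse]; omega) ?_
    intro w hw
    obtain ⟨t, -, -, rfl⟩ := hs w (by simpa using hw)
    exact ⟨t, rfl⟩
  exfalso
  apply hno
  obtain ⟨p, hp, -, hps, -⟩ := h.arc' 1 j (by omega) (by omega)
  obtain ⟨r, hr, -, hrs, -⟩ := h.arc' j (n - 1) (by omega) (by omega)
  have hrs' : ∀ w ∈ r.reverse.support, ∃ t, j ≤ t ∧ t ≤ n - 1 ∧ w = c t :=
    fun w hw => hrs w (by simpa using hw)
  have hadj2 : G.Adj (c 0) (c (n - 1)) := by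
    have := h.adj (n - 1)
    rw [show n - 1 + 1 = n by omega, cn] at this
    exact this.symm
  have dpr : ∀ w, w ∈ p.support → w ∈ r.reverse.support → w = c j := by
    intro w h1 h2
    obtain ⟨t, a1, a2, rfl⟩ := hps w h1
    obtain ⟨t', b1, b2, e⟩ := hrs' _ h2
    have := h.inj t t' (by omega) (by omega) e
    rw [show t = j by omega]
  have dpE : ∀ w, w ∈ p.support → w ∈ E.support → w = c j := by
    intro w h1 h2
    obtain ⟨t, a1, a2, rfl⟩ := hps w h1
    exact hEb _ h2 ⟨t, rfl⟩
  have drE : ∀ w, w ∈ r.reverse.support → w ∈ E.support → w = c j := by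
    intro w h1 h2
    obtain ⟨t, a1, a2, rfl⟩ := hrs' w h1
    exact hEb _ h2 ⟨t, rfl⟩
  refine theta (x := c 0) (y := c j) ![c 1, c (n - 1), v] ?_
    (Fin.cons p (Fin.cons r.reverse (Fin.cons E finZeroElim))) ?_ ?_ ?_ ?_
  · intro i
    fin_cases i
    · exact h.adj 0
    · exact hadj2
    · exact hadj
  · intro i
    fin_cases i
    · exact hp
    · exact hr.reverse
    · exact hE
  · intro i
    fin_cases i
    · intro e
      have := h.inj 1 j (by omega) (by omega) e
      omega
    · intro e
      have := h.inj j (n - 1) (by omega) (by omega) (Eq.symm e)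
      omega
    · exact hvj
  · intro i
    fin_cases i
    · intro hh
      obtain ⟨t, a1, a2, e⟩ := hps _ hh
      have := h.inj 0 t (by omega) (by omega) e
      omega
    · intro hh
      obtain ⟨t, a1, a2, e⟩ := hrs' _ hh
      have := h.inj 0 t (by omega) (by omega) e
      omega
    · exact hE0
  · intro i k hik w h1 h2
    fin_cases i <;> fin_cases k
    · exact absurd rfl hik
    · exact dpr w h1 h2
    · exact dpE w h1 h2
    · exact dpr w h2 h1
    · exact absurd rfl hik
    · exact drE w h1 h2
    · exact dpE w h2 h1
    · exact drE w h2 h1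
    · exact absurd rfl hik

theorem exists_ham {V : Type u} [Finite V] {G : SimpleGraph V} (h2 : TwoConnected G)
    (hno : ¬ ContainsSubdivision G (completeBipartiteGraph (Fin 2) (Fin 3))) :
    ∃ n c, Cyc G n c ∧ Function.Surjective c := by
  by_contra hcon
  push Not at hcon
  have grow : ∀ n c, Cyc G n c → ∃ n' c', n < n' ∧ Cyc G n' c' := by
    intro n c h
    have hs := hcon n c h
    simp only [Function.Surjective, not_forall] at hs
    obtain ⟨v, hv⟩ := hs
    have hv' : v ∉ Set.range c := hv
    have : ∃ p : G.Walk (c 0) v, True := by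
      have h3 := h.three
      have e1 : c 0 ≠ c 1 := fun e => by
        have := h.inj 0 1 (by omega) (by omega) e
        omega
      obtain ⟨p, -⟩ := h2.avoid (v := c 1) (a := c 0) (b := v) e1 (fun e => hv ⟨1, e.symm⟩)
      exact ⟨p, trivial⟩
    obtain ⟨p, -⟩ := this
    obtain ⟨d, -, ⟨a, ha⟩, hd⟩ := p.exists_boundary_dart (Set.range c) ⟨0, rfl⟩ hv'
    refine ear_step h2 hno (h.rot a) (v := d.snd) ?_ ?_
    · rintro ⟨t, ht⟩
      exact hd ⟨_, ht⟩
    · have := d.adj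
      rw [← ha] at this
      exact this
  have big : ∀ N, ∃ n c, N ≤ n ∧ Cyc G n c := by
    intro N
    induction N with
    | zero =>
      obtain ⟨n, c, h⟩ := exists_cyc h2
      exact ⟨n, c, by omega, h⟩
    | succ N ih =>
      obtain ⟨n, c, hn, h⟩ := ih
      obtain ⟨n', c', hn', h'⟩ := grow n c h
      exact ⟨n', c', by omega, h'⟩
  obtain ⟨n, c, hn, h⟩ := big (Nat.card V + 1)
  have := h.le_card
  omega

theorem Cyc.chord {V : Type u} {G : SimpleGraph V} {n : ℕ} {c : ℕ → V} (h : Cyc G n c)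
    (hs : Function.Surjective c) (t : ℕ) (hd : (G.neighborSet (c t)).ncard ≠ 2) :
    ∃ s, t + 2 ≤ s ∧ s + 2 ≤ t + n ∧ G.Adj (c t) (c s) := by
  have h3 := h.three
  by_contra hcon
  push Not at hcon
  apply hd
  have hne : c (t + 1) ≠ c (t + n - 1) := by
    intro e
    have := h.inj (t + 1) (t + n - 1) (by omega) (by omega) e
    omega
  rw [← Set.ncard_pair hne]
  congr 1
  ext w
  simp only [mem_neighborSet, Set.mem_insert_iff, Set.mem_singleton_iff]
  constructor
  · intro hw
    obtain ⟨s0, rfl⟩ := hs w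
    obtain ⟨s, a1, a2, a3⟩ := h.window t s0
    rw [← a3] at hw ⊢
    by_cases e1 : s = t
    · subst e1
      exact absurd hw (G.loopless.irrefl _)
    by_cases e2 : s = t + 1
    · left; rw [e2]
    by_cases e3 : s = t + n - 1
    · right; rw [e3]
    exact absurd hw (hcon s (by omega) (by omega))
  · rintro (rfl | rfl)
    · exact h.adj t
    · have := h.adj (t + n - 1)
      rw [show t + n - 1 + 1 = t + n by omega, h.per] at this
      exact this.symm

theorem Cyc.ear {V : Type u} {G : SimpleGraph V} {n : ℕ} {c : ℕ → V} (h : Cyc G n c)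
    (hs : Function.Surjective c) (hno : ¬ ContainsSubdivision G (⊤ : SimpleGraph (Fin 4)))
    (N : ℕ) : ∀ a b, b - a ≤ N → a + 2 ≤ b → b + 2 ≤ a + n → G.Adj (c a) (c b) →
    ∃ i j, a ≤ i ∧ i + 2 ≤ j ∧ j ≤ b ∧ G.Adj (c i) (c j) ∧
      ∀ t, i < t → t < j → (G.neighborSet (c t)).ncard = 2 := by
  induction N with
  | zero => intro a b h1 h2; omega
  | succ N ih =>
    intro a b hN hab hbn hadj
    by_cases hall : ∀ t, a < t → t < b → (G.neighborSet (c t)).ncard = 2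
    · exact ⟨a, b, le_rfl, hab, le_rfl, hadj, hall⟩
    push Not at hall
    obtain ⟨t, h1, h2, hd⟩ := hall
    obtain ⟨s, s1, s2, hts⟩ := h.chord hs t hd
    by_cases hsb : s ≤ b
    · obtain ⟨i, j, e1, e2, e3, e4⟩ := ih t s (by omega) (by omega) (by omega) hts
      exact ⟨i, j, by omega, e2, by omega, e4⟩
    by_cases hsa : a + n ≤ s
    · have hp := h.per (s - n)
      rw [show s - n + n = s by omega] at hp
      rw [hp] at hts
      obtain ⟨i, j, e1, e2, e3, e4⟩ := ih (s - n) t (by omega) (by omega) (by omega) hts.symm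
      exact ⟨i, j, by omega, e2, by omega, e4⟩
    exfalso
    apply hno
    refine (h.rot a).k4 (k := t - a) (j := b - a) (l := s - a) (by omega) (by omega) (by omega)
      (by omega) ?_ ?_
    · simpa [show a + (b - a) = b by omega] using hadj
    · simpa [show a + (t - a) = t by omega, show a + (s - a) = s by omega] using hts

theorem Cyc.flat {V : Type u} {G : SimpleGraph V} {n : ℕ} {c : ℕ → V} (h : Cyc G n c)
    (hs : Function.Surjective c) (hno : ¬ ContainsSubdivision G (⊤ : SimpleGraph (Fin 4)))
    (a b : ℕ) (hab : a + 2 ≤ b) (hbn : b + 2 ≤ a + n) (hadj : G.Adj (c a) (c b)) :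
    ∃ x y, ∃ p : G.Walk x y, G.Adj x y ∧ IsFlatPath G p ∧
      ∀ e ∈ p.edges, ∃ t, a ≤ t ∧ t < b ∧ e = s(c t, c (t + 1)) := by
  obtain ⟨i, j, e1, e2, e3, e4, e5⟩ := h.ear hs hno (b - a) a b le_rfl hab hbn hadj
  obtain ⟨p, hp, hl, hps, hpe⟩ := h.arc' i j (by omega) (by omega)
  refine ⟨c i, c j, p, e4, ⟨hp, by omega, ?_⟩, ?_⟩
  · intro v hv hvi hvj
    obtain ⟨t, t1, t2, rfl⟩ := hps v hv
    refine e5 t ?_ ?_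
    · rcases Nat.lt_or_ge i t with h1 | h1
      · exact h1
      · exact absurd (by rw [show t = i by omega]) hvi
    · rcases Nat.lt_or_ge t j with h1 | h1
      · exact h1
      · exact absurd (by rw [show t = j by omega]) hvj
  · intro e he
    obtain ⟨t, t1, t2, t3⟩ := hpe e he
    exact ⟨t, by omega, by omega, t3⟩

/-- Every 2-connected outerplanar graph that is not a cycle has a compliant edge;
moreover it has at least two edge-disjoint flat paths whose endpoints span
compliant edges. -/
theorem stmt0 {V : Type u} [Finite V] (G : SimpleGraph V)
    (h2 : TwoConnected G) (hop : Outerplanar G) (hnc : ¬ IsCycleGraph G) :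
    (∃ x y : V, Compliant G x y) ∧
    ∃ (x y u v : V) (p : G.Walk x y) (q : G.Walk u v),
      IsFlatPath G p ∧ IsFlatPath G q ∧
      (∀ e ∈ p.edges, e ∉ q.edges) ∧
      Compliant G x y ∧ Compliant G u v := by

  obtain ⟨n, c, h, hs⟩ := exists_ham h2 hop.2
  have h3 := h.three
  have hconn : G.Connected := by
    have hne : Nonempty V := ⟨c 0⟩
    refine ⟨?_⟩
    have reach : ∀ t, G.Reachable (c 0) (c t) := by
      intro t
      induction t with
      | zero => exact Reachable.refl _
      | succ t ih => exact ih.trans (h.adj t).reachable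
    intro x y
    obtain ⟨s, rfl⟩ := hs x
    obtain ⟨t, rfl⟩ := hs y
    exact (reach s).symm.trans (reach t)
  have hdeg : ∃ v, (G.neighborSet v).ncard ≠ 2 := by
    by_contra hcon
    push Not at hcon
    exact hnc ⟨hconn, hcon⟩
  obtain ⟨v, hv⟩ := hdeg
  obtain ⟨a, rfl⟩ := hs v
  obtain ⟨s, s1, s2, has⟩ := h.chord hs a hv
  obtain ⟨x, y, p, hxy, hp, hpe⟩ := h.flat hs hop.1 a s s1 s2 has
  obtain ⟨u, w, q, huw, hq, hqe⟩ := h.flat hs hop.1 s (a + n) (by omega) (by omega)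
    (by rw [h.per]; exact has.symm)
  refine ⟨⟨x, y, hxy, p, hp⟩, x, y, u, w, p, q, hp, hq, ?_, ⟨hxy, p, hp⟩, ⟨huw, q, hq⟩⟩
  intro e he he'
  obtain ⟨t, t1, t2, rfl⟩ := hpe e he
  obtain ⟨t', t1', t2', e⟩ := hqe _ he'
  rw [Sym2.eq_iff] at e
  rcases e with ⟨e1, -⟩ | ⟨e1, e2⟩
  · have := h.inj t t' (by omega) (by omega) e1
    omega
  · by_cases hlt : t' + 1 < t + n
    · have := h.inj t (t' + 1) (by omega) (by omega) e1
      omega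
    · have := h.inj (t + 1) t' (by omega) (by omega) e2
      omega
end

section
/- If G is a 2-connected graph that is not outerplanar and x, y are any two (not necessarily adjacent) vertices of G, then G contains a subgraph which is a subdivision of K_4 or of K_{2,3} containing both x and y. -/
open SimpleGraph

universe u

namespace S7

variable {V : Type u} {G : SimpleGraph V}

/-- There is a path from `a` to `b` with vertex set `S`. -/
def PS (G : SimpleGraph V) (a b : V) (S : Set V) : Prop :=
  ∃ p : G.Walk a b, p.IsPath ∧ ∀ w, w ∈ p.support ↔ w ∈ S

theorem PS.left {a b : V} {S : Set V} (h : PS G a b S) : a ∈ S := by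
  obtain ⟨p, hp, hs⟩ := h
  exact (hs a).1 p.start_mem_support

theorem PS.right {a b : V} {S : Set V} (h : PS G a b S) : b ∈ S := by
  obtain ⟨p, hp, hs⟩ := h
  exact (hs b).1 p.end_mem_support

theorem PS.symm {a b : V} {S : Set V} (h : PS G a b S) : PS G b a S := by
  obtain ⟨p, hp, hs⟩ := h
  exact ⟨p.reverse, hp.reverse, by simpa using hs⟩

theorem PS.congr {a b : V} {S T : Set V} (h : PS G a b S) (e : ∀ w, w ∈ S ↔ w ∈ T) :
    PS G a b T := by
  have : S = T := Set.ext e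
  exact this ▸ h

theorem PS.nil (a : V) : PS G a a {a} := ⟨Walk.nil, by simp, by simp⟩

theorem PS.edge {a b : V} (h : G.Adj a b) : PS G a b {a, b} :=
  ⟨Walk.cons h Walk.nil, by simp [h.ne], by simp⟩

theorem PS.trans {a b c : V} {S T : Set V} (h1 : PS G a b S) (h2 : PS G b c T)
    (h : ∀ w, w ∈ S → w ∈ T → w = b) : PS G a c (S ∪ T) := by
  obtain ⟨p, hp, hs⟩ := h1
  obtain ⟨q, hq, ht⟩ := h2
  refine ⟨p.append q, ?_, ?_⟩
  · rw [Walk.isPath_def] at hp hq ⊢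
    rw [Walk.support_append, List.nodup_append]
    have hq' := hq
    rw [Walk.support_eq_cons, List.nodup_cons] at hq'
    refine ⟨hp, hq'.2, ?_⟩
    rintro w hw w' hw' rfl
    have := h w ((hs w).1 hw) ((ht w).1 (List.mem_of_mem_tail hw'))
    exact hq'.1 (this ▸ hw')
  · intro w
    rw [Walk.mem_support_append_iff, hs, ht]; rfl

theorem PS.eq_nil {a : V} {S : Set V} (h : PS G a a S) : S = {a} := by
  obtain ⟨p, hp, hs⟩ := h
  rw [Walk.isPath_iff_eq_nil] at hp
  subst hp
  ext w; rw [← hs]; simp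

theorem PS.split {a b w : V} {S : Set V} (h : PS G a b S) (hw : w ∈ S) :
    ∃ S1 S2, PS G a w S1 ∧ PS G w b S2 ∧ (∀ t, t ∈ S ↔ t ∈ S1 ∨ t ∈ S2) ∧
      ∀ t, t ∈ S1 → t ∈ S2 → t = w := by
  classical
  obtain ⟨p, hp, hs⟩ := h
  have hw' := (hs w).2 hw
  refine ⟨{t | t ∈ (p.takeUntil w hw').support}, {t | t ∈ (p.dropUntil w hw').support},
    ⟨_, hp.takeUntil hw', fun _ => Iff.rfl⟩, ⟨_, hp.dropUntil hw', fun _ => Iff.rfl⟩, ?_, ?_⟩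
  · intro t
    rw [← hs]
    conv_lhs => rw [← p.take_spec hw']
    rw [Walk.mem_support_append_iff]; rfl
  · intro t h1 h2
    rw [← p.take_spec hw', Walk.isPath_def, Walk.support_append, List.nodup_append] at hp
    by_contra hne
    simp only [Set.mem_ofPred_eq] at h1 h2
    rw [Walk.mem_support_iff] at h2
    exact hp.2.2 t h1 t (h2.resolve_left hne) rfl

theorem firsthit_path (C : Set V) {a b : V} (p : G.Walk a b) (hp : p.IsPath) (hb : b ∈ C) :
    ∃ w ∈ C, ∃ S, PS G a w S ∧ (∀ t ∈ S, t ∈ C → t = w) ∧ ∀ t ∈ S, t ∈ p.support := by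
  induction p with
  | nil => exact ⟨_, hb, _, PS.nil _, by simp, by simp⟩
  | @cons u v w h p ih =>
    rw [Walk.cons_isPath_iff] at hp
    by_cases hu : u ∈ C
    · exact ⟨u, hu, _, PS.nil _, by simp, by simp⟩
    · obtain ⟨z, hz, S, hS, hC, hsub⟩ := ih hp.1 hb
      refine ⟨z, hz, _, (PS.edge h).trans hS ?_, ?_, ?_⟩
      · rintro t (rfl | rfl) ht
        · exact absurd (hsub _ ht) hp.2
        · rfl
      · rintro t ((rfl | rfl) | ht) htC
        · exact absurd htC hu
        · exact hC _ hS.left htC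
        · exact hC _ ht htC
      · rintro t ((rfl | rfl) | ht)
        · simp
        · simp
        · simp [hsub t ht]

theorem firsthit (C : Set V) {a b : V} (p : G.Walk a b) (hb : b ∈ C) :
    ∃ w ∈ C, ∃ S, PS G a w S ∧ (∀ t ∈ S, t ∈ C → t = w) ∧ ∀ t ∈ S, t ∈ p.support := by
  classical
  obtain ⟨w, hw, S, h1, h2, h3⟩ := firsthit_path C p.bypass p.bypass_isPath hb
  exact ⟨w, hw, S, h1, h2, fun t ht => p.support_bypass_subset_support (h3 t ht)⟩

theorem avoid (h2 : TwoConnected G) (v a b : V) (ha : a ≠ v) (hb : b ≠ v) :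
    ∃ p : G.Walk a b, v ∉ p.support := by
  obtain ⟨p⟩ := (h2.2 v).preconnected ⟨a, by simpa using ha⟩ ⟨b, by simpa using hb⟩
  refine ⟨p.map (Subgraph.hom _), ?_⟩
  intro h
  have h' := (Walk.support_map (Subgraph.hom _) p) ▸ h
  obtain ⟨⟨w, hw⟩, _, e⟩ := List.mem_map.1 h'
  simp at hw e
  exact hw e

/-- `C` is the vertex set of a cycle. -/
def Cyc (G : SimpleGraph V) (C : Set V) : Prop :=
  ∃ a b, PS G a b C ∧ G.Adj a b ∧ ∃ t ∈ C, t ≠ a ∧ t ≠ b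

theorem split_aux {a b u v : V} {S1 S2 : Set V} (h1 : PS G a u S1) (h2 : PS G u b S2)
    (hi : ∀ t, t ∈ S1 → t ∈ S2 → t = u) (hab : G.Adj a b) (hv : v ∈ S2) (huv : u ≠ v) :
    ∃ S T, PS G u v S ∧ PS G u v T ∧ (∀ t, t ∈ S → t ∈ T → t = u ∨ t = v) ∧
      (∀ t, t ∈ S1 ∨ t ∈ S2 ↔ t ∈ S ∨ t ∈ T) := by
  obtain ⟨S21, S22, h21, h22, hm, hi2⟩ := h2.split hv
  have l1 := h1.left
  have l2 := h1.right
  have l3 := h2.left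
  have l4 := h2.right
  have l5 := h21.left
  have l6 := h21.right
  have l7 := h22.left
  have l8 := h22.right
  have hub : u ≠ b := by
    rintro rfl
    have := h2.eq_nil
    subst this
    exact huv hv.symm
  have hbS1 : b ∉ S1 := fun h => hub (hi b h l4).symm
  have haS2 : a ∈ S22 → False := by
    intro h
    have := hi a l1 ((hm a).2 (Or.inr h))
    subst this
    exact huv (hi2 a l5 h)
  refine ⟨S21, _, h21, (h1.symm.trans (PS.edge hab) ?_).trans h22.symm ?_, ?_, ?_⟩
  · rintro w hw (rfl | rfl)
    · rfl
    · exact absurd hw hbS1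
  · rintro w (hw | (rfl | rfl)) hw2
    · have := hi w hw ((hm w).2 (Or.inr hw2))
      subst this
      exact absurd (hi2 w l5 hw2) huv
    · exact (haS2 hw2).elim
    · rfl
  · rintro t ht ((h | (rfl | rfl)) | h)
    · exact Or.inl (hi t h ((hm t).2 (Or.inl ht)))
    · exact Or.inl (hi t l1 ((hm t).2 (Or.inl ht)))
    · exact Or.inr (hi2 t ht l8)
    · exact Or.inr (hi2 t ht h)
  · intro t
    simp only [Set.mem_union, Set.mem_insert_iff, Set.mem_singleton_iff, hm]
    constructor
    · tauto
    · rintro (h | (h | (rfl | rfl)) | h) <;> tauto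

theorem Cyc.split {C : Set V} (h : Cyc G C) {u v : V} (hu : u ∈ C) (hv : v ∈ C) (huv : u ≠ v) :
    ∃ S T, PS G u v S ∧ PS G u v T ∧ (∀ t, t ∈ S → t ∈ T → t = u ∨ t = v) ∧
      (∀ t, t ∈ C ↔ t ∈ S ∨ t ∈ T) := by
  obtain ⟨a, b, hp, hab, -⟩ := h
  obtain ⟨S1, S2, h1, h2, hm, hi⟩ := hp.split hu
  rcases (hm v).1 hv with h | h
  · obtain ⟨S, T, k1, k2, k3, k4⟩ := split_aux h2.symm h1.symm (fun t x y => hi t y x) hab.symm h huv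
    exact ⟨S, T, k1, k2, k3, fun t => by rw [hm, ← k4, or_comm]⟩
  · obtain ⟨S, T, k1, k2, k3, k4⟩ := split_aux h1 h2 hi hab h huv
    exact ⟨S, T, k1, k2, k3, fun t => by rw [hm, ← k4]⟩

theorem PS.last {u v : V} {T : Set V} (h : PS G u v T) (huv : u ≠ v) :
    ∃ w T', PS G w v T' ∧ G.Adj u w ∧ u ∉ T' ∧ ∀ t, t ∈ T ↔ t = u ∨ t ∈ T' := by
  obtain ⟨p, hp, hs⟩ := h
  cases p with
  | nil => exact absurd rfl huv
  | @cons _ w _ h p =>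
    rw [Walk.cons_isPath_iff] at hp
    refine ⟨w, {t | t ∈ p.support}, ⟨p, hp.1, fun _ => Iff.rfl⟩, h, hp.2, fun t => ?_⟩
    rw [← hs]; simp

theorem Cyc.join {u v : V} {S T : Set V} (h1 : PS G u v S) (h2 : PS G u v T) (huv : u ≠ v)
    (hi : ∀ t, t ∈ S → t ∈ T → t = u ∨ t = v) (ht : ∃ t ∈ S, t ≠ u ∧ t ≠ v) :
    Cyc G (S ∪ T) := by
  obtain ⟨w, T', h3, hw, hu, hm⟩ := h2.last huv
  obtain ⟨t, ht, htu, htv⟩ := ht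
  have hPS := h1.trans h3.symm (by
    intro z h h'
    rcases hi z h ((hm z).2 (Or.inr h')) with rfl | rfl
    · exact absurd h' hu
    · rfl)
  refine ⟨u, w, hPS.congr ?_, hw, t, Or.inl ht, htu, ?_⟩
  · intro z
    simp only [Set.mem_union, hm]
    constructor
    · tauto
    · rintro (h | rfl | h)
      · tauto
      · exact Or.inl h1.left
      · tauto
  · rintro rfl
    rcases hi t ht ((hm t).2 (Or.inr h3.left)) with h | h
    · exact htu h
    · exact htv h

theorem third [Finite V] (h2 : TwoConnected G) (x y : V) : ∃ t, t ≠ x ∧ t ≠ y := by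
  classical
  by_contra h
  push Not at h
  have : Set.univ ⊆ ({x, y} : Set V) := by
    intro t _
    by_cases e : t = x
    · simp [e]
    · simp [h t e]
  have h3 := Set.ncard_le_ncard this (Set.toFinite _)
  rw [Set.ncard_univ] at h3
  have := Set.ncard_insert_le x {y}
  rw [Set.ncard_singleton] at this
  have := h2.1
  omega

theorem exists_cyc_adj [Finite V] (h2 : TwoConnected G) {x y : V} (h : G.Adj x y) :
    ∃ C, Cyc G C ∧ x ∈ C ∧ y ∈ C := by
  obtain ⟨t, htx, hty⟩ := third h2 x y
  obtain ⟨p, hp⟩ := avoid h2 y x t h.ne hty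
  cases p with
  | nil => exact absurd rfl htx
  | @cons _ w _ hw p =>
    have hwy : w ≠ y := by
      rintro rfl
      exact hp (by simp)
    obtain ⟨q, hq⟩ := avoid h2 x w y hw.ne' h.ne'
    obtain ⟨z, hz, S, hS, -, hsub⟩ := firsthit {y} q rfl
    obtain rfl : z = y := hz
    have hxS : x ∉ S := fun h => hq (hsub _ h)
    refine ⟨_, ⟨x, z, (PS.edge hw).trans hS ?_, h, w, Or.inr hS.left, hw.ne', hwy⟩,
      Or.inl (Or.inl rfl), Or.inr hS.right⟩
    rintro t (rfl | rfl) ht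
    · exact absurd ht hxS
    · rfl

theorem cyc_step (h2 : TwoConnected G) {x z y : V} {C : Set V} (hC : Cyc G C) (hx : x ∈ C)
    (hz : z ∈ C) (hxz : x ≠ z) (h : G.Adj z y) : ∃ C, Cyc G C ∧ x ∈ C ∧ y ∈ C := by
  by_cases hy : y ∈ C
  · exact ⟨C, hC, hx, hy⟩
  obtain ⟨p, hp⟩ := avoid h2 z y x h.ne' hxz
  obtain ⟨w, hw, S, hS, hSC, hsub⟩ := firsthit C p hx
  have hzS : z ∉ S := fun h => hp (hsub _ h)
  have hzw : z ≠ w := by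
    rintro rfl
    exact hzS hS.right
  have hzy : PS G z w ({z, y} ∪ S) := (PS.edge h).trans hS (by
    rintro t (rfl | rfl) ht
    · exact absurd ht hzS
    · rfl)
  have key : ∀ T, PS G z w T → (∀ t ∈ T, t ∈ C) → x ∈ T → ∃ C, Cyc G C ∧ x ∈ C ∧ y ∈ C := by
    intro T hT hTC hxT
    refine ⟨_, Cyc.join hzy hT hzw ?_ ⟨y, by simp, h.ne', ?_⟩, Or.inr hxT, Or.inl (by simp)⟩
    · rintro t ((rfl | rfl) | ht) htT
      · exact Or.inl rfl
      · exact absurd (hTC _ htT) hy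
      · exact Or.inr (hSC t ht (hTC t htT))
    · rintro rfl; exact hy hw
  obtain ⟨S', T', k1, k2, k3, k4⟩ := hC.split hz hw hzw
  rcases (k4 x).1 hx with h | h
  · exact key S' k1 (fun t ht => (k4 t).2 (Or.inl ht)) h
  · exact key T' k2 (fun t ht => (k4 t).2 (Or.inr ht)) h

theorem exists_cyc_walk [Finite V] (h2 : TwoConnected G) {x y : V} (p : G.Walk y x) (hxy : x ≠ y) :
    ∃ C, Cyc G C ∧ x ∈ C ∧ y ∈ C := by
  induction p with
  | nil => exact absurd rfl hxy
  | @cons y z x h p ih =>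
    by_cases hz : x = z
    · subst hz
      exact exists_cyc_adj h2 h.symm
    · obtain ⟨C, hC, h1, h3⟩ := ih hz
      exact cyc_step h2 hC h1 h3 hz h.symm

theorem exists_cyc [Finite V] (h2 : TwoConnected G) (x y : V) :
    ∃ C, Cyc G C ∧ x ∈ C ∧ y ∈ C := by
  have main : ∀ x y : V, x ≠ y → ∃ C, Cyc G C ∧ x ∈ C ∧ y ∈ C := by
    intro x y hxy
    obtain ⟨t, htx, hty⟩ := third h2 x y
    obtain ⟨p, -⟩ := avoid h2 t y x hty.symm htx.symm
    exact exists_cyc_walk h2 p hxy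
  by_cases hxy : x = y
  · subst hxy
    obtain ⟨t, htx, -⟩ := third h2 x x
    obtain ⟨C, h, h', -⟩ := main x t htx.symm
    exact ⟨C, h, h', h'⟩
  · exact main x y hxy

/-- The fan lemma. -/
theorem fan (h2 : TwoConnected G) {C : Set V} (hC : Cyc G C) {z : V} (hz : z ∉ C) :
    ∃ w1 ∈ C, ∃ w2 ∈ C, w1 ≠ w2 ∧ ∃ S, PS G w1 w2 S ∧ (∀ t ∈ S, t ∈ C → t = w1 ∨ t = w2) ∧
      ∃ t ∈ S, t ∉ C := by
  obtain ⟨a, b, hab, hadj, -⟩ := hC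
  have ha := hab.left
  have hb := hab.right
  have hne := hadj.ne
  obtain ⟨p, -⟩ := avoid h2 b z a (by rintro rfl; exact hz hb) hne
  obtain ⟨w1, hw1, A, hA, hAC, -⟩ := firsthit C p ha
  have : ∃ c ∈ C, c ≠ w1 := by
    by_cases e : a = w1
    · exact ⟨b, hb, by rintro rfl; exact hne e⟩
    · exact ⟨a, ha, e⟩
  obtain ⟨c, hc, hcw⟩ := this
  obtain ⟨q, hq⟩ := avoid h2 w1 z c (by rintro rfl; exact hz hw1) hcw
  obtain ⟨w2, hw2, B, hB, hBC, hBs⟩ := firsthit C q hc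
  have hw1B : w1 ∉ B := fun h => hq (hBs _ h)
  obtain ⟨r, hr, hrs⟩ := hB.symm
  obtain ⟨t, ht, S, hS, hSA, hSr⟩ := firsthit A r hA.left
  have hSB : ∀ s ∈ S, s ∈ B := fun s hs => (hrs s).1 (hSr s hs)
  obtain ⟨A1, A2, hA1, hA2, hm, hi⟩ := hA.split ht
  have hw12 : w1 ≠ w2 := by
    rintro rfl
    exact hw1B hB.right
  refine ⟨w1, hw1, w2, hw2, hw12, _, hA2.symm.trans hS.symm ?_, ?_, t, Or.inl hA2.left, ?_⟩
  · intro w h1 h3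
    exact hSA w h3 ((hm w).2 (Or.inr h1))
  · rintro s (hs | hs) hsC
    · exact Or.inl (hAC s ((hm s).2 (Or.inr hs)) hsC)
    · exact Or.inr (hBC s (hSB s hs) hsC)
  · intro htC
    have := hAC t ht htC
    subst this
    exact hw1B (hSB _ hS.right)

/-- Constructor for subdivisions. -/
theorem mkSub {W : Type} {H : SimpleGraph W} (f : W → V) (hf : Function.Injective f)
    (E : V → Sym2 W) (S : W → W → Set V)
    (hS : ∀ u v, H.Adj u v → PS G (f u) (f v) (S u v))
    (hE : ∀ u v, H.Adj u v → ∀ w ∈ S u v, w = f u ∨ w = f v ∨ ((∀ z, w ≠ f z) ∧ E w = s(u, v))) :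
    ∃ D : SubdivisionIn G H, ∀ u v, H.Adj u v → ∀ w ∈ S u v, w ∈ D.verts := by
  choose p hp hps using hS
  refine ⟨⟨f, hf, fun u v h => p u v h, fun u v h => hp u v h, ?_, ?_⟩, ?_⟩
  · rintro u v h w hw ⟨z, hz⟩
    rcases hE u v h w ((hps u v h w).1 hw) with h | h | h
    · exact Or.inl h
    · exact Or.inr h
    · exact absurd hz (h.1 z)
  · rintro u v u' v' h h' hne w hw hw'
    rcases hE u v h w ((hps u v h w).1 hw) with k | k | k
    · exact Or.inl k
    · exact Or.inr k
    · rcases hE u' v' h' w ((hps u' v' h' w).1 hw') with k' | k' | k'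
      · exact absurd k' (k.1 _)
      · exact absurd k' (k.1 _)
      · exact absurd (k.2.symm.trans k'.2) hne
  · intro u v h w hw
    exact ⟨u, v, h, (hps u v h w).2 hw⟩

/-- Positions along a path. -/
theorem positions {a b : V} (p : G.Walk a b) (hp : p.IsPath) :
    ∃ pos : V → ℕ, (∀ u ∈ p.support, ∀ v ∈ p.support, pos u = pos v → u = v) ∧ pos a = 0 ∧
      (∀ w ∈ p.support, pos w ≤ pos b) ∧
      ∀ u ∈ p.support, ∀ v ∈ p.support, pos u ≤ pos v →
        PS G u v {w | w ∈ p.support ∧ pos u ≤ pos w ∧ pos w ≤ pos v} := by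
  classical
  induction p with
  | nil =>
    refine ⟨fun _ => 0, by simp, rfl, by simp, ?_⟩
    intro u hu v hv _
    simp at hu hv
    subst hu; subst hv
    exact (PS.nil _).congr (by simp)
  | @cons a c b h p ih =>
    rw [Walk.cons_isPath_iff] at hp
    obtain ⟨pos, h1, h2, h3, h4⟩ := ih hp.1
    have hb : b ≠ a := by rintro rfl; exact hp.2 p.end_mem_support
    have hmem : ∀ w, w ∈ p.support → w ≠ a := by rintro w hw rfl; exact hp.2 hw
    refine ⟨fun w => if w = a then 0 else pos w + 1, ?_, by simp, ?_, ?_⟩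
    · intro u hu v hv huv
      simp only [Walk.support_cons, List.mem_cons] at hu hv
      grind
    · intro w hw
      simp only [Walk.support_cons, List.mem_cons] at hw
      grind
    · intro u hu v hv huv
      simp only [Walk.support_cons, List.mem_cons] at hu hv
      by_cases eu : u = a
      · subst eu
        by_cases ev : v = u
        · subst ev
          refine (PS.nil v).congr ?_
          intro w
          simp
          grind
        · have hv' := hv.resolve_left ev
          refine ((PS.edge h).trans (h4 c p.start_mem_support v hv' (by omega)) ?_).congr ?_
          · rintro w (rfl | rfl) hw
            · exact absurd hw.1 hp.2
            · rfl
          · intro w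
            have := p.start_mem_support
            simp only [Set.mem_union, Set.mem_insert_iff, Set.mem_singleton_iff, Set.mem_ofPred_eq,
              Walk.support_cons, List.mem_cons]
            grind
      · have hu' := hu.resolve_left eu
        have ev : v ≠ a := by
          rintro rfl
          simp [eu] at huv
        have hv' := hv.resolve_left ev
        refine (h4 u hu' v hv' (by simpa [eu, ev] using huv)).congr ?_
        intro w
        simp only [Set.mem_ofPred_eq, Walk.support_cons, List.mem_cons]
        grind

theorem walk_boundary (Q : V → Prop) {a c : V} (p : G.Walk a c) (ha : Q a) (hc : ¬ Q c) :
    ∃ u v, u ∈ p.support ∧ v ∈ p.support ∧ G.Adj u v ∧ Q u ∧ ¬ Q v := by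
  induction p with
  | nil => exact absurd ha hc
  | @cons a b c h p ih =>
    by_cases hb : Q b
    · obtain ⟨u, v, h1, h2, h3⟩ := ih hb hc
      exact ⟨u, v, by simp [h1], by simp [h2], h3⟩
    · exact ⟨a, b, by simp, by simp, h, ha, hb⟩

/-- `x` is strictly between `b` and `d`. -/
def Btw (pos : V → ℕ) (b d x : V) : Prop :=
  (pos b < pos x ∧ pos x < pos d) ∨ (pos d < pos x ∧ pos x < pos b)

theorem walk_boundary' (Q : V → Prop) {a c : V} (p : G.Walk a c) (hac : ¬ (Q a ↔ Q c)) :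
    ∃ u v, u ∈ p.support ∧ v ∈ p.support ∧ G.Adj u v ∧ Q u ∧ ¬ Q v := by
  by_cases ha : Q a
  · exact walk_boundary Q p ha (by tauto)
  · obtain ⟨u, v, h1, h2, h3⟩ := walk_boundary Q p.reverse (by tauto) ha
    exact ⟨u, v, by simpa using h1, by simpa using h2, h3⟩

theorem no_cross {pos : V → ℕ} (hpos : Function.Injective pos)
    (hnc : ∀ u1 u2 v1 v2, G.Adj u1 u2 → G.Adj v1 v2 →
      ¬ (pos u1 < pos v1 ∧ pos v1 < pos u2 ∧ pos u2 < pos v2))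
    {a b c d : V} (p : G.Walk a c) (q : G.Walk b d) (hd : ∀ w ∈ p.support, w ∉ q.support)
    (hx : ¬ (Btw pos b d a ↔ Btw pos b d c)) : False := by
  obtain ⟨u, v, hu, hv, huv, h1, h2⟩ := walk_boundary' (Btw pos b d) p hx
  have e : ∀ s ∈ p.support, ∀ t ∈ q.support, pos s ≠ pos t := by
    intro s hs t ht h
    have := hpos h
    subst this
    exact hd s hs ht
  have ub := e u hu b q.start_mem_support
  have ud := e u hu d q.end_mem_support
  have vb := e v hv b q.start_mem_support
  have vd := e v hv d q.end_mem_support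
  have : ¬ (Btw pos u v b ↔ Btw pos u v d) := by
    unfold Btw at *; omega
  obtain ⟨s, t, hs, ht, hst, h3, h4⟩ := walk_boundary' (Btw pos u v) q this
  have k1 := e u hu s hs
  have k2 := e u hu t ht
  have k3 := e v hv s hs
  have k4 := e v hv t ht
  unfold Btw at h3 h4
  rcases h3 with h3 | h3
  · rcases (by omega : pos t < pos u ∨ pos v < pos t) with h | h
    · exact hnc t s u v hst.symm huv ⟨h, h3⟩
    · exact hnc u v s t huv hst ⟨h3.1, h3.2, h⟩
  · rcases (by omega : pos t < pos v ∨ pos u < pos t) with h | h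
    · exact hnc t s v u hst.symm huv.symm ⟨h, h3⟩
    · exact hnc v u s t huv.symm hst ⟨h3.1, h3.2, h⟩

theorem disj {W : Type} {H : SimpleGraph W} (D : SubdivisionIn G H) {u v u' v' : W}
    (h : H.Adj u v) (h' : H.Adj u' v') (h1 : u ≠ u') (h2 : u ≠ v') (h3 : v ≠ u') (h4 : v ≠ v') :
    ∀ w ∈ (D.path h).support, w ∉ (D.path h').support := by
  intro w hw hw'
  have e1 := D.internal_disjoint h h' (by simp; tauto) w hw hw'
  have e2 := D.internal_disjoint h' h (by simp; tauto) w hw' hw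
  rcases e1 with e1 | e1 <;> rcases e2 with e2 | e2 <;> have := D.inj (e1.symm.trans e2) <;> tauto

theorem noncross_outer {pos : V → ℕ} (hpos : Function.Injective pos)
    (hnc : ∀ u1 u2 v1 v2, G.Adj u1 u2 → G.Adj v1 v2 →
      ¬ (pos u1 < pos v1 ∧ pos v1 < pos u2 ∧ pos u2 < pos v2)) : Outerplanar G := by
  constructor
  · rintro ⟨D⟩
    have hne : ∀ i j : Fin 4, i ≠ j → pos (D.f i) ≠ pos (D.f j) := fun i j h h' =>
      h (D.inj (hpos h'))
    have key : ∀ i j k l : Fin 4, i ≠ j → k ≠ l → i ≠ k → i ≠ l → j ≠ k → j ≠ l →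
        (Btw pos (D.f k) (D.f l) (D.f i) ↔ Btw pos (D.f k) (D.f l) (D.f j)) := by
      intro i j k l h1 h2 h3 h4 h5 h6
      by_contra hx
      exact no_cross hpos hnc (D.path (show (⊤ : SimpleGraph (Fin 4)).Adj i j from h1))
        (D.path (show (⊤ : SimpleGraph (Fin 4)).Adj k l from h2)) (disj D _ _ h3 h4 h5 h6) hx
    have k1 := key 0 1 2 3 (by decide) (by decide) (by decide) (by decide) (by decide) (by decide)
    have k2 := key 0 2 1 3 (by decide) (by decide) (by decide) (by decide) (by decide) (by decide)
    have k3 := key 0 3 1 2 (by decide) (by decide) (by decide) (by decide) (by decide) (by decide)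
    have n1 := hne 0 1 (by decide)
    have n2 := hne 0 2 (by decide)
    have n3 := hne 0 3 (by decide)
    have n4 := hne 1 2 (by decide)
    have n5 := hne 1 3 (by decide)
    have n6 := hne 2 3 (by decide)
    unfold Btw at *
    omega
  · rintro ⟨D⟩
    have hne : ∀ i j, i ≠ j → pos (D.f i) ≠ pos (D.f j) := fun i j h h' =>
      h (D.inj (hpos h'))
    have key : ∀ i j : Fin 3, i ≠ j →
        (Btw pos (D.f (.inl 1)) (D.f (.inr j)) (D.f (.inl 0)) ↔
          Btw pos (D.f (.inl 1)) (D.f (.inr j)) (D.f (.inr i))) := by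
      intro i j h
      by_contra hx
      exact no_cross hpos hnc
        (D.path (show (completeBipartiteGraph (Fin 2) (Fin 3)).Adj (.inl 0) (.inr i) by simp))
        (D.path (show (completeBipartiteGraph (Fin 2) (Fin 3)).Adj (.inl 1) (.inr j) by simp))
        (disj D _ _ (by simp) (by simp) (by simp) (by simpa using h)) hx
    have k1 := key 0 1 (by decide)
    have k2 := key 1 0 (by decide)
    have k3 := key 0 2 (by decide)
    have k4 := key 2 0 (by decide)
    have k5 := key 1 2 (by decide)
    have k6 := key 2 1 (by decide)
    have n0 := hne (.inl 0) (.inl 1) (by simp)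
    have m : ∀ i j, pos (D.f (.inl i)) ≠ pos (D.f (.inr j)) := fun i j => hne _ _ (by simp)
    have m1 := m 0 0
    have m2 := m 0 1
    have m3 := m 0 2
    have m4 := m 1 0
    have m5 := m 1 1
    have m6 := m 1 2
    have n1 := hne (.inr 0) (.inr 1) (by simp)
    have n2 := hne (.inr 0) (.inr 2) (by simp)
    have n3 := hne (.inr 1) (.inr 2) (by simp)
    unfold Btw at *
    omega

theorem mkK4 {pos : V → ℕ} (hpos : Function.Injective pos)
    (hI : ∀ u v, pos u ≤ pos v → PS G u v {w | pos u ≤ pos w ∧ pos w ≤ pos v})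
    {a b : V} (hab : G.Adj a b) (ha : ∀ w, pos a ≤ pos w) (hb : ∀ w, pos w ≤ pos b)
    {p0 p1 p2 p3 : V} (h02 : G.Adj p0 p2) (h13 : G.Adj p1 p3)
    (h01 : pos p0 < pos p1) (h12 : pos p1 < pos p2) (h23 : pos p2 < pos p3) :
    ∃ D : SubdivisionIn G (⊤ : SimpleGraph (Fin 4)), ∀ w, w ∈ D.verts := by
  classical
  have hinj : ∀ u v, pos u = pos v → u = v := fun u v h => hpos h
  have q01 := hI p0 p1 h01.le
  have q12 := hI p1 p2 h12.le
  have q23 := hI p2 p3 h23.le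
  have q03 : PS G p0 p3 {w | pos w ≤ pos p0 ∨ pos p3 ≤ pos w} := by
    refine (((hI a p0 (ha _)).symm.trans (PS.edge hab) ?_).trans (hI p3 b (hb _)).symm ?_).congr ?_
    · rintro w ⟨h, h'⟩ (rfl | rfl)
      · rfl
      · have := hb p3
        omega
    · rintro w (⟨h, h'⟩ | (rfl | rfl)) ⟨k, k'⟩
      · omega
      · have := ha p0
        omega
      · rfl
    · intro w
      have h1 := ha w
      have h2 := hb w
      have h3 := ha p0
      have h4 := hb p3
      simp only [Set.mem_union, Set.mem_insert_iff, Set.mem_singleton_iff, Set.mem_ofPred_eq]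
      constructor
      · rintro ((h | (rfl | rfl)) | h)
        · omega
        · omega
        · omega
        · omega
      · rintro (h | h)
        · exact Or.inl (Or.inl ⟨h1, h⟩)
        · exact Or.inr ⟨h, h2⟩
  let f : Fin 4 → V := ![p0, p1, p2, p3]
  have hf : ∀ z, f z = p0 ∨ f z = p1 ∨ f z = p2 ∨ f z = p3 := by
    intro z; fin_cases z <;> simp [f]
  let E : V → Sym2 (Fin 4) := fun w => if pos w < pos p0 then s(0, 3) else
    if pos w < pos p1 then s(0, 1) else if pos w < pos p2 then s(1, 2) else
    if pos w < pos p3 then s(2, 3) else s(0, 3)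
  have hnot : ∀ w, w ≠ p0 → w ≠ p1 → w ≠ p2 → w ≠ p3 → ∀ z, w ≠ f z := by
    intro w h0 h1 h2 h3 z
    rcases hf z with h | h | h | h <;> rw [h] <;> assumption
  have r01 : ∀ w, pos p0 ≤ pos w ∧ pos w ≤ pos p1 →
      w = p0 ∨ w = p1 ∨ ((∀ z, w ≠ f z) ∧ E w = s(0, 1)) := by
    intro w hw
    by_cases e0 : w = p0
    · exact Or.inl e0
    by_cases e1 : w = p1
    · exact Or.inr (Or.inl e1)
    have n0 := mt (hinj w p0) e0
    have n1 := mt (hinj w p1) e1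
    refine Or.inr (Or.inr ⟨hnot w e0 e1 (by rintro rfl; omega) (by rintro rfl; omega), ?_⟩)
    simp only [E]
    rw [if_neg (by omega), if_pos (by omega)]
  have r12 : ∀ w, pos p1 ≤ pos w ∧ pos w ≤ pos p2 →
      w = p1 ∨ w = p2 ∨ ((∀ z, w ≠ f z) ∧ E w = s(1, 2)) := by
    intro w hw
    by_cases e0 : w = p1
    · exact Or.inl e0
    by_cases e1 : w = p2
    · exact Or.inr (Or.inl e1)
    have n0 := mt (hinj w p1) e0
    have n1 := mt (hinj w p2) e1
    refine Or.inr (Or.inr ⟨hnot w (by rintro rfl; omega) e0 e1 (by rintro rfl; omega), ?_⟩)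
    simp only [E]
    rw [if_neg (by omega), if_neg (by omega), if_pos (by omega)]
  have r23 : ∀ w, pos p2 ≤ pos w ∧ pos w ≤ pos p3 →
      w = p2 ∨ w = p3 ∨ ((∀ z, w ≠ f z) ∧ E w = s(2, 3)) := by
    intro w hw
    by_cases e0 : w = p2
    · exact Or.inl e0
    by_cases e1 : w = p3
    · exact Or.inr (Or.inl e1)
    have n0 := mt (hinj w p2) e0
    have n1 := mt (hinj w p3) e1
    refine Or.inr (Or.inr ⟨hnot w (by rintro rfl; omega) (by rintro rfl; omega) e0 e1, ?_⟩)
    simp only [E]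
    rw [if_neg (by omega), if_neg (by omega), if_neg (by omega), if_pos (by omega)]
  have r03 : ∀ w, pos w ≤ pos p0 ∨ pos p3 ≤ pos w →
      w = p0 ∨ w = p3 ∨ ((∀ z, w ≠ f z) ∧ E w = s(0, 3)) := by
    intro w hw
    by_cases e0 : w = p0
    · exact Or.inl e0
    by_cases e1 : w = p3
    · exact Or.inr (Or.inl e1)
    have n0 := mt (hinj w p0) e0
    have n1 := mt (hinj w p3) e1
    refine Or.inr (Or.inr ⟨hnot w e0 (by rintro rfl; omega) (by rintro rfl; omega) e1, ?_⟩)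
    simp only [E]
    rcases hw with hw | hw
    · rw [if_pos (by omega)]
    · rw [if_neg (by omega), if_neg (by omega), if_neg (by omega), if_neg (by omega)]
  let I01 : Set V := {w | pos p0 ≤ pos w ∧ pos w ≤ pos p1}
  let I12 : Set V := {w | pos p1 ≤ pos w ∧ pos w ≤ pos p2}
  let I23 : Set V := {w | pos p2 ≤ pos w ∧ pos w ≤ pos p3}
  let I03 : Set V := {w | pos w ≤ pos p0 ∨ pos p3 ≤ pos w}
  let S : Fin 4 → Fin 4 → Set V := fun i j =>
    if s(i, j) = s(0, 1) then I01 else if s(i, j) = s(1, 2) then I12 else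
    if s(i, j) = s(2, 3) then I23 else if s(i, j) = s(0, 3) then I03 else {f i, f j}
  have hSs : ∀ i j, S i j = S j i := by
    intro i j
    simp only [S, Sym2.eq_swap (a := i) (b := j), Set.pair_comm (f i) (f j)]
  have red : ∀ P : Fin 4 → Fin 4 → Prop, (∀ i j, P i j → P j i) → P 0 1 → P 1 2 → P 2 3 → P 0 3 →
      P 0 2 → P 1 3 → ∀ i j, i ≠ j → P i j := by
    intro P hs _ _ _ _ _ _ i j hij
    fin_cases i <;> fin_cases j <;> first | exact absurd rfl hij | assumption | (apply hs; assumption)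
  have s01 : S 0 1 = I01 := by simp [S]
  have s12 : S 1 2 = I12 := by simp [S]
  have s23 : S 2 3 = I23 := by simp [S]
  have s03 : S 0 3 = I03 := by simp [S]
  have s02 : S 0 2 = {p0, p2} := by simp [S, f]
  have s13 : S 1 3 = {p1, p3} := by simp [S, f]
  obtain ⟨D, hD⟩ := mkSub (H := (⊤ : SimpleGraph (Fin 4))) f (by
      have key := red (fun i j => f i ≠ f j) (fun i j h => h.symm)
        (show p0 ≠ p1 by rintro rfl; omega) (show p1 ≠ p2 by rintro rfl; omega)
        (show p2 ≠ p3 by rintro rfl; omega) (show p0 ≠ p3 by rintro rfl; omega)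
        (show p0 ≠ p2 by rintro rfl; omega) (show p1 ≠ p3 by rintro rfl; omega)
      intro i j h
      by_contra hne
      exact key i j hne h) E S
    (by
      intro i j hij
      refine red (fun i j => PS G (f i) (f j) (S i j)) ?_ ?_ ?_ ?_ ?_ ?_ ?_ i j hij
      · intro i j h
        rw [hSs]
        exact h.symm
      · rw [s01]; exact q01
      · rw [s12]; exact q12
      · rw [s23]; exact q23
      · rw [s03]; exact q03
      · rw [s02]; exact PS.edge h02
      · rw [s13]; exact PS.edge h13)
    (by
      intro i j hij
      refine red (fun i j => ∀ w ∈ S i j, w = f i ∨ w = f j ∨ ((∀ z, w ≠ f z) ∧ E w = s(i, j)))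
        ?_ ?_ ?_ ?_ ?_ ?_ ?_ i j hij
      · intro i j h w hw
        rw [hSs] at hw
        rw [Sym2.eq_swap]
        rcases h w hw with h | h | h
        · exact Or.inr (Or.inl h)
        · exact Or.inl h
        · exact Or.inr (Or.inr h)
      · rw [s01]; exact r01
      · rw [s12]; exact r12
      · rw [s23]; exact r23
      · rw [s03]; exact r03
      · rw [s02]; rintro w (h | h)
        · exact Or.inl h
        · exact Or.inr (Or.inl h)
      · rw [s13]; rintro w (h | h)
        · exact Or.inl h
        · exact Or.inr (Or.inl h))
  refine ⟨D, fun w => ?_⟩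
  by_cases c0 : pos w ≤ pos p0
  · exact hD 0 3 (by simp) w (by rw [s03]; exact Or.inl c0)
  by_cases c1 : pos w ≤ pos p1
  · exact hD 0 1 (by simp) w (by rw [s01]; exact ⟨by omega, c1⟩)
  by_cases c2 : pos w ≤ pos p2
  · exact hD 1 2 (by simp) w (by rw [s12]; exact ⟨by omega, c2⟩)
  by_cases c3 : pos w ≤ pos p3
  · exact hD 2 3 (by simp) w (by rw [s23]; exact ⟨by omega, c3⟩)
  · exact hD 0 3 (by simp) w (by rw [s03]; exact Or.inr (by omega))

theorem mkTheta {a b : V} (hab : a ≠ b) (S : Fin 3 → Set V) (hS : ∀ i, PS G a b (S i))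
    (hd : ∀ i j, i ≠ j → ∀ w, w ∈ S i → w ∈ S j → w = a ∨ w = b)
    (ht : ∀ i, ∃ t ∈ S i, t ≠ a ∧ t ≠ b) :
    ∃ D : SubdivisionIn G (completeBipartiteGraph (Fin 2) (Fin 3)),
      ∀ i, ∀ w ∈ S i, w ∈ D.verts := by
  classical
  choose t htS hta htb using ht
  choose A B hA hB hm hi using fun i => (hS i).split (htS i)
  have hAS : ∀ i w, w ∈ A i → w ∈ S i := fun i w h => (hm i w).2 (Or.inl h)
  have hBS : ∀ i w, w ∈ B i → w ∈ S i := fun i w h => (hm i w).2 (Or.inr h)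
  have htinj : ∀ i j, t i = t j → i = j := by
    intro i j h
    by_contra hne
    rcases hd i j hne (t i) (htS i) (h ▸ htS j) with h | h
    · exact hta i h
    · exact htb i h
  have hbA : ∀ i, b ∉ A i := fun i h => htb i (hi i b h (hB i).right).symm
  have haB : ∀ i, a ∉ B i := fun i h => hta i (hi i a (hA i).left h).symm
  let f : Fin 2 ⊕ Fin 3 → V := Sum.elim ![a, b] t
  have hf : ∀ w, w ≠ a → w ≠ b → (∀ i, w ≠ t i) → ∀ z, w ≠ f z := by
    intro w h1 h2 h3 z
    rcases z with z | z
    · fin_cases z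
      · exact h1
      · exact h2
    · exact h3 z
  have hfinj : Function.Injective f := by
    rintro (i | i) (j | j) h
    · fin_cases i <;> fin_cases j <;> simp [f, hab, hab.symm] at h ⊢
    · fin_cases i
      · exact absurd h.symm (hta j)
      · exact absurd h.symm (htb j)
    · fin_cases j
      · exact absurd h (hta i)
      · exact absurd h (htb i)
    · rw [htinj i j h]
  let E : V → Sym2 (Fin 2 ⊕ Fin 3) := fun w =>
    if h : ∃ i, w ∈ A i then s(.inl 0, .inr h.choose) else
    if h : ∃ i, w ∈ B i then s(.inl 1, .inr h.choose) else s(.inl 0, .inl 0)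
  let T : Fin 2 ⊕ Fin 3 → Fin 2 ⊕ Fin 3 → Set V := fun u v =>
    match u, v with
    | .inl 0, .inr j => A j
    | .inl 1, .inr j => B j
    | .inr j, .inl 0 => A j
    | .inr j, .inl 1 => B j
    | _, _ => ∅
  have hnt : ∀ w i, w ∈ S i → w ≠ a → w ≠ b → w ≠ t i → ∀ j, w ≠ t j := by
    rintro w i hw h1 h2 h3 j rfl
    by_cases e : i = j
    · subst e; exact h3 rfl
    · rcases hd i j e _ hw (htS j) with h | h
      · exact h1 h
      · exact h2 h
  have rA : ∀ i, ∀ w ∈ A i, w = a ∨ w = t i ∨ ((∀ z, w ≠ f z) ∧ E w = s(.inl 0, .inr i)) := by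
    intro i w hw
    by_cases e1 : w = a
    · exact Or.inl e1
    by_cases e2 : w = t i
    · exact Or.inr (Or.inl e2)
    have e3 : w ≠ b := by rintro rfl; exact hbA i hw
    refine Or.inr (Or.inr ⟨hf w e1 e3 (hnt w i (hAS i w hw) e1 e3 e2), ?_⟩)
    have hex : ∃ i, w ∈ A i := ⟨i, hw⟩
    have : hex.choose = i := by
      by_contra hne
      rcases hd _ _ hne w (hAS _ _ hex.choose_spec) (hAS _ _ hw) with h | h
      · exact e1 h
      · exact e3 h
    simp only [E]
    rw [dif_pos hex, this]
  have rB : ∀ i, ∀ w ∈ B i, w = b ∨ w = t i ∨ ((∀ z, w ≠ f z) ∧ E w = s(.inl 1, .inr i)) := by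
    intro i w hw
    by_cases e1 : w = b
    · exact Or.inl e1
    by_cases e2 : w = t i
    · exact Or.inr (Or.inl e2)
    have e3 : w ≠ a := by rintro rfl; exact haB i hw
    refine Or.inr (Or.inr ⟨hf w e3 e1 (hnt w i (hBS i w hw) e3 e1 e2), ?_⟩)
    have hex : ∃ i, w ∈ B i := ⟨i, hw⟩
    have : hex.choose = i := by
      by_contra hne
      rcases hd _ _ hne w (hBS _ _ hex.choose_spec) (hBS _ _ hw) with h | h
      · exact e3 h
      · exact e1 h
    have hnex : ¬ ∃ i, w ∈ A i := by
      rintro ⟨j, hj⟩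
      by_cases e : i = j
      · subst e; exact e2 (hi i w hj hw)
      · rcases hd _ _ e w (hBS _ _ hw) (hAS _ _ hj) with h | h
        · exact e3 h
        · exact e1 h
    simp only [E]
    rw [dif_neg hnex, dif_pos hex, this]
  have swap : ∀ (w x y : V) (P : Prop), w = x ∨ w = y ∨ P → w = y ∨ w = x ∨ P := by
    intros; tauto
  obtain ⟨D, hD⟩ := mkSub (H := completeBipartiteGraph (Fin 2) (Fin 3)) f hfinj E T
    (by
      rintro (i | i) (j | j) h
      · simp at h
      · fin_cases i
        · exact hA j
        · exact (hB j).symm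
      · fin_cases j
        · exact (hA i).symm
        · exact hB i
      · simp at h)
    (by
      rintro (i | i) (j | j) h
      · simp at h
      · fin_cases i
        · exact rA j
        · exact rB j
      · rw [Sym2.eq_swap]
        fin_cases j
        · exact fun w hw => swap _ _ _ _ (rA i w hw)
        · exact fun w hw => swap _ _ _ _ (rB i w hw)
      · simp at h)
  refine ⟨D, fun i w hw => ?_⟩
  rcases (hm i w).1 hw with h | h
  · exact hD (.inl 0) (.inr i) (by simp) w h
  · exact hD (.inl 1) (.inr i) (by simp) w h

theorem main [Finite V] (h2 : TwoConnected G) (hnop : ¬ Outerplanar G) (x y : V) :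
    (∃ D : SubdivisionIn G (⊤ : SimpleGraph (Fin 4)), x ∈ D.verts ∧ y ∈ D.verts) ∨
    (∃ D : SubdivisionIn G (completeBipartiteGraph (Fin 2) (Fin 3)),
      x ∈ D.verts ∧ y ∈ D.verts) := by
  classical
  have hfin : ({C : Set V | Cyc G C ∧ x ∈ C ∧ y ∈ C}).Finite := Set.toFinite _
  obtain ⟨C, ⟨hC, hx, hy⟩, hmax⟩ := Set.exists_max_image _ Set.ncard hfin (exists_cyc h2 x y)
  by_cases hall : ∀ z, z ∈ C
  · left
    obtain ⟨a, b, ⟨p, hp, hs⟩, hab, -⟩ := hC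
    have hsup : ∀ w, w ∈ p.support := fun w => (hs w).2 (hall w)
    obtain ⟨pos, k1, k2, k3, k4⟩ := positions p hp
    have hpos : Function.Injective pos := fun u v h => k1 u (hsup u) v (hsup v) h
    by_contra hno
    refine hnop (noncross_outer hpos ?_)
    rintro u1 u2 v1 v2 hu hv ⟨c1, c2, c3⟩
    obtain ⟨D, hD⟩ := mkK4 hpos
      (fun u v huv => (k4 u (hsup u) v (hsup v) huv).congr (by simp [hsup]))
      hab (fun w => by omega) (fun w => k3 w (hsup w)) hu hv c1 c2 c3
    exact hno ⟨D, hD x, hD y⟩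
  · right
    push Not at hall
    obtain ⟨z, hz⟩ := hall
    obtain ⟨w1, hw1, w2, hw2, hne, Q, hQ, hQC, q, hq, hqC⟩ := fan h2 hC hz
    obtain ⟨S, T, hS, hT, hi, hm⟩ := hC.split hw1 hw2 hne
    have hSC : ∀ t ∈ S, t ∈ C := fun t h => (hm t).2 (Or.inl h)
    have hTC : ∀ t ∈ T, t ∈ C := fun t h => (hm t).2 (Or.inr h)
    have hq1 : q ≠ w1 := by rintro rfl; exact hqC hw1
    have hq2 : q ≠ w2 := by rintro rfl; exact hqC hw2
    have big : ∀ R, PS G w1 w2 R → (∀ t ∈ R, t ∈ C) → (∀ t ∈ C, t ∈ R ∨ t = w1 ∨ t = w2) →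
        False := by
      intro R hR hRC hCR
      have hc : Cyc G (Q ∪ R) := Cyc.join hQ hR hne (fun t h h' => hQC t h (hRC t h'))
        ⟨q, hq, hq1, hq2⟩
      have hsub : ∀ t ∈ C, t ∈ Q ∪ R := by
        intro t ht
        rcases hCR t ht with h | rfl | rfl
        · exact Or.inr h
        · exact Or.inl hQ.left
        · exact Or.inl hQ.right
      have h1 := hmax (Q ∪ R) ⟨hc, hsub x hx, hsub y hy⟩
      have h2 : C.ncard < (Q ∪ R).ncard :=
        Set.ncard_lt_ncard ⟨hsub, fun h => hqC (h (Or.inl hq))⟩ (Set.toFinite _)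
      omega
    have tS : ∃ t ∈ S, t ≠ w1 ∧ t ≠ w2 := by
      by_contra hno
      push Not at hno
      refine big T hT hTC fun t ht => ?_
      rcases (hm t).1 ht with h | h
      · by_cases e : t = w1
        · exact Or.inr (Or.inl e)
        · exact Or.inr (Or.inr (hno t h e))
      · exact Or.inl h
    have tT : ∃ t ∈ T, t ≠ w1 ∧ t ≠ w2 := by
      by_contra hno
      push Not at hno
      refine big S hS hSC fun t ht => ?_
      rcases (hm t).1 ht with h | h
      · exact Or.inl h
      · by_cases e : t = w1
        · exact Or.inr (Or.inl e)
        · exact Or.inr (Or.inr (hno t h e))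
    obtain ⟨D, hD⟩ := mkTheta hne ![S, T, Q]
      (by intro i; fin_cases i; exacts [hS, hT, hQ])
      (by
        have c1 : ∀ w, w ∈ S → w ∈ Q → w = w1 ∨ w = w2 := fun w h h' => hQC w h' (hSC w h)
        have c2 : ∀ w, w ∈ T → w ∈ Q → w = w1 ∨ w = w2 := fun w h h' => hQC w h' (hTC w h)
        intro i j hij
        fin_cases i <;> fin_cases j
        · exact absurd rfl hij
        · exact hi
        · exact c1
        · exact fun w h h' => hi w h' h
        · exact absurd rfl hij
        · exact c2
        · exact fun w h h' => c1 w h' h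
        · exact fun w h h' => c2 w h' h
        · exact absurd rfl hij)
      (by intro i; fin_cases i; exacts [tS, tT, ⟨q, hq, hq1, hq2⟩])
    have hDC : ∀ w ∈ C, w ∈ D.verts := by
      intro w hw
      rcases (hm w).1 hw with h | h
      · exact hD 0 w h
      · exact hD 1 w h
    exact ⟨D, hDC x hx, hDC y hy⟩

end S7

/-- If `G` is 2-connected and not outerplanar, then any two vertices `x`, `y`
lie together in a subgraph of `G` which is a subdivision of `K₄` or of `K_{2,3}`. -/
theorem stmt7 {V : Type u} [Finite V] (G : SimpleGraph V)
    (h2 : TwoConnected G) (hnop : ¬ Outerplanar G) (x y : V) :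
    (∃ D : SubdivisionIn G (⊤ : SimpleGraph (Fin 4)), x ∈ D.verts ∧ y ∈ D.verts) ∨
    (∃ D : SubdivisionIn G (completeBipartiteGraph (Fin 2) (Fin 3)),
      x ∈ D.verts ∧ y ∈ D.verts) := by
  exact S7.main h2 hnop x y
end
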